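/- For every equivalence class [ĉ] ∈ Rec(G,s)/~_s, the s-level and the d-level of the class coincide: slvl([ĉ]) = dlvl([ĉ]). -/

import Mathlib

open Finset Polynomial

namespace SandpileBM

variable {V E : Type} [Fintype V] [DecidableEq V] [Fintype E] [DecidableEq E]

/-- The number of edges from `v` to `w` in the multigraph given by `src`, `tgt`. -/
def numEdges (src tgt : E → V) (v w : V) : ℕ :=
  (Finset.univ.filter fun e => src e = v ∧ tgt e = w).card

/-- The out-degree of a vertex. -/
def outdeg (src : E → V) (v : V) : ℕ :=
  (Finset.univ.filter fun e => src e = v).card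

/-- The in-degree of a vertex. -/
def indeg (tgt : E → V) (v : V) : ℕ :=
  (Finset.univ.filter fun e => tgt e = v).card

/-- The digraph is strongly connected: any vertex is reachable from any other by
a directed path. -/
def StronglyConnected (src tgt : E → V) : Prop :=
  ∀ v w : V, Relation.ReflTransGen (fun a b => ∃ e : E, src e = a ∧ tgt e = b) v w

/-- Result of firing the vertex `v` on the chip configuration `c` (sinkless model). -/
def fire (src tgt : E → V) (c : V → ℕ) (v : V) : V → ℕ :=
  fun w => c w + numEdges src tgt v w - (if w = v then outdeg src v else 0)

/-- One legal firing move in the sinkless model. -/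
def FireStep (src tgt : E → V) (c d : V → ℕ) : Prop :=
  ∃ v : V, outdeg src v ≤ c v ∧ d = fire src tgt c v

/-- `Reach c d`: `d` is obtained from `c` by a finite sequence of legal firing moves. -/
def Reach (src tgt : E → V) : (V → ℕ) → (V → ℕ) → Prop :=
  Relation.ReflTransGen (FireStep src tgt)

/-- Stability of a chip configuration. -/
def Stable (src : E → V) (c : V → ℕ) : Prop :=
  ∀ v : V, c v < outdeg src v

/-- A chip configuration is recurrent if it is not stable and every configuration
accessible from it can reach it back. -/
def Recurrent (src tgt : E → V) (c : V → ℕ) : Prop :=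
  ¬ Stable src c ∧ ∀ d : V → ℕ, Reach src tgt c d → Reach src tgt d c

/-- Level (total number of chips) of a chip configuration. -/
def lvl (c : V → ℕ) : ℕ := ∑ v : V, c v

/-- Indicator function of the vertex `s`. -/
def deltaS (s : V) : V → ℕ := fun v => if v = s then 1 else 0

/-- Result of firing the vertex `v` on an `s`-configuration. -/
def sfire (src tgt : E → V) (s : V) (c : {v : V // v ≠ s} → ℕ) (v : {v : V // v ≠ s}) :
    {v : V // v ≠ s} → ℕ :=
  fun w => c w + numEdges src tgt v.1 w.1 - (if w = v then outdeg src v.1 else 0)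

/-- One legal s-firing move. -/
def SFireStep (src tgt : E → V) (s : V) (c d : {v : V // v ≠ s} → ℕ) : Prop :=
  ∃ v : {v : V // v ≠ s}, outdeg src v.1 ≤ c v ∧ d = sfire src tgt s c v

/-- `SReach c d`: `d` is obtained from `c` by a finite sequence of legal s-firing moves. -/
def SReach (src tgt : E → V) (s : V) :
    ({v : V // v ≠ s} → ℕ) → ({v : V // v ≠ s} → ℕ) → Prop :=
  Relation.ReflTransGen (SFireStep src tgt s)

/-- Stability of an `s`-configuration. -/
def SStable (src : E → V) (s : V) (c : {v : V // v ≠ s} → ℕ) : Prop :=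
  ∀ v : {v : V // v ≠ s}, c v < outdeg src v.1

/-- The stabilization `c°` of an `s`-configuration: the (for strongly connected digraphs,
unique) stable `s`-configuration reachable from `c` by legal s-firing moves. -/
noncomputable def stab (src tgt : E → V) (s : V) (c : {v : V // v ≠ s} → ℕ) :
    {v : V // v ≠ s} → ℕ :=
  Classical.epsilon fun d => SReach src tgt s c d ∧ SStable src s d

/-- An `s`-configuration `c` is s-recurrent if every `s`-configuration can be completed
to one whose stabilization is `c`. -/
def SRecurrent (src tgt : E → V) (s : V) (c : {v : V // v ≠ s} → ℕ) : Prop :=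
  ∀ c₁ : {v : V // v ≠ s} → ℕ, ∃ c₂ : {v : V // v ≠ s} → ℕ,
    stab src tgt s (c₁ + c₂) = c

/-- `β_s`, recording the number of edges from `s` to each other vertex. -/
def betaS (src tgt : E → V) (s : V) : {v : V // v ≠ s} → ℕ :=
  fun v => numEdges src tgt s v.1

/-- The relation `~_s` on s-recurrent configurations: `d = (c + k·β_s)°` for some `k`. -/
def SEquiv (src tgt : E → V) (s : V) (c d : {v : V // v ≠ s} → ℕ) : Prop :=
  ∃ k : ℕ, stab src tgt s (c + k • betaS src tgt s) = d

/-- Restriction of a chip configuration to `V ∖ {s}`. -/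
def restrictS (s : V) (c : V → ℕ) : {v : V // v ≠ s} → ℕ := fun v => c v.1

/-- Extension `c̄` of an `s`-configuration by `0` at `s`. -/
def extendS (s : V) (c : {v : V // v ≠ s} → ℕ) : V → ℕ :=
  fun v => if h : v = s then 0 else c ⟨v, h⟩

/-- The s-index `χ(c)`: the least `k` such that `c̄ + k·δ_s` is recurrent. -/
noncomputable def sIndex (src tgt : E → V) (s : V) (c : {v : V // v ≠ s} → ℕ) : ℕ :=
  sInf {k : ℕ | Recurrent src tgt (extendS s c + k • deltaS s)}

/-- `φ(c) := c̄ + χ(c)·δ_s`. -/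
noncomputable def phi (src tgt : E → V) (s : V) (c : {v : V // v ≠ s} → ℕ) : V → ℕ :=
  extendS s c + sIndex src tgt s c • deltaS s

/-- The s-level `slvl(c) := χ(c) + Σ_{v ≠ s} c(v)`. -/
noncomputable def slvl (src tgt : E → V) (s : V) (c : {v : V // v ≠ s} → ℕ) : ℕ :=
  sIndex src tgt s c + ∑ v : {v : V // v ≠ s}, c v

/-- The d-level `dlvl(c) := deg⁺(s) + Σ_{v ≠ s} c(v)`. -/
def dlvl (src : E → V) (s : V) (c : {v : V // v ≠ s} → ℕ) : ℕ :=
  outdeg src s + ∑ v : {v : V // v ≠ s}, c v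

/-- The set (as a type) of recurrent chip configurations. -/
abbrev RecL (src tgt : E → V) := {c : V → ℕ // Recurrent src tgt c}

/-- The setoid on recurrent configurations generated by the relation `~` (i.e. `⤳`). -/
def recLSetoid (src tgt : E → V) : Setoid (RecL src tgt) :=
  Relation.EqvGen.setoid fun a b => Reach src tgt a.1 b.1

/-- The set of `~`-classes of recurrent configurations. -/
abbrev RecLQuot (src tgt : E → V) := Quotient (recLSetoid src tgt)

/-- The set (as a type) of s-recurrent configurations. -/
abbrev RecS (src tgt : E → V) (s : V) := {c : {v : V // v ≠ s} → ℕ // SRecurrent src tgt s c}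

/-- The setoid on s-recurrent configurations generated by the relation `~_s`. -/
def recSSetoid (src tgt : E → V) (s : V) : Setoid (RecS src tgt s) :=
  Relation.EqvGen.setoid fun a b => SEquiv src tgt s a.1 b.1

/-- The set of `~_s`-classes of s-recurrent configurations. -/
abbrev RecSQuot (src tgt : E → V) (s : V) := Quotient (recSSetoid src tgt s)

/-- The level of a `~`-class of recurrent configurations (level is constant on classes). -/
noncomputable def lvlClass (src tgt : E → V) (q : RecLQuot src tgt) : ℕ :=
  sSup ((fun c : RecL src tgt => lvl c.1) '' {c | Quotient.mk (recLSetoid src tgt) c = q})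

/-- The s-level of a `~_s`-class (s-level is constant on classes). -/
noncomputable def slvlClass (src tgt : E → V) (s : V) (q : RecSQuot src tgt s) : ℕ :=
  sSup ((fun c : RecS src tgt s => slvl src tgt s c.1) ''
    {c | Quotient.mk (recSSetoid src tgt s) c = q})

/-- The d-level of a `~_s`-class: the maximum d-level over the class. -/
noncomputable def dlvlClass (src tgt : E → V) (s : V) (q : RecSQuot src tgt s) : ℕ :=
  sSup ((fun c : RecS src tgt s => dlvl src s c.1) ''
    {c | Quotient.mk (recSSetoid src tgt s) c = q})

/-- The Biggs–Merino polynomial `B(G,s;y) = Σ_{[c] ∈ Rec(G,s)/~_s} y^{dlvl([c])}`. -/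
noncomputable def BM (src tgt : E → V) (s : V) : Polynomial ℤ :=
  ∑ᶠ q : RecSQuot src tgt s, X ^ dlvlClass src tgt s q

/-- `LegalSeq l c d`: firing the vertices in the list `l` in order is a sequence of
legal firing moves transforming `c` into `d` (sinkless model). -/
def LegalSeq (src tgt : E → V) : List V → (V → ℕ) → (V → ℕ) → Prop
  | [], c, d => d = c
  | v :: l, c, d => outdeg src v ≤ c v ∧ LegalSeq src tgt l (fire src tgt c v) d

/-- `SLegalSeq l c d`: firing the vertices in the list `l` in order is a sequence of
legal s-firing moves transforming `c` into `d`. -/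
def SLegalSeq (src tgt : E → V) (s : V) :
    List {v : V // v ≠ s} → ({v : V // v ≠ s} → ℕ) → ({v : V // v ≠ s} → ℕ) → Prop
  | [], c, d => d = c
  | v :: l, c, d => outdeg src v.1 ≤ c v ∧ SLegalSeq src tgt s l (sfire src tgt s c v) d

/-- The configuration obtained from `c` after firing the vertices of `l` in order. -/
def iterFire (src tgt : E → V) (c : V → ℕ) (l : List V) : V → ℕ :=
  l.foldl (fire src tgt) c

/-- The Laplacian of the digraph applied to an integer vector:
`(Δq)(v) = deg⁺(v)·q(v) − Σ_w A(w,v)·q(w)`. -/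
def lapApply (src tgt : E → V) (q : V → ℤ) : V → ℤ :=
  fun v => (outdeg src v : ℤ) * q v - ∑ w : V, (numEdges src tgt w v : ℤ) * q w

/-- `r` is the primitive period vector of the digraph: it has positive entries with
gcd `1`, lies in the kernel of the Laplacian, and generates this kernel. -/
def IsPeriodVector (src tgt : E → V) (r : V → ℕ) : Prop :=
  (∀ v : V, 0 < r v) ∧ Finset.univ.gcd r = 1 ∧
    lapApply src tgt (fun v => (r v : ℤ)) = 0 ∧
    ∀ q : V → ℤ, lapApply src tgt q = 0 → ∃ k : ℤ, q = k • fun v => (r v : ℤ)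

/-- The Laplacian matrix of the digraph. -/
def lapMatrix (src tgt : E → V) : Matrix V V ℤ :=
  Matrix.of fun v w =>
    if v = w then (outdeg src v : ℤ) - numEdges src tgt v v
    else -(numEdges src tgt w v : ℤ)

/-- The determinant of the reduced Laplacian obtained by deleting the row and
column indexed by `v`. -/
def reducedLapDet (src tgt : E → V) (v : V) : ℤ :=
  (((lapMatrix src tgt).submatrix (fun a : {w : V // w ≠ v} => a.1)
    (fun a : {w : V // w ≠ v} => a.1)).det)

/-- The period constant `α := gcd_{v ∈ V} det Δ_v`. -/
def periodConstant (src tgt : E → V) : ℤ :=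
  Finset.univ.gcd (reducedLapDet src tgt)

/-- `IsWalk l a b`: the list of edges `l` forms a directed walk from `a` to `b`. -/
def IsWalk (src tgt : E → V) : List E → V → V → Prop
  | [], a, b => a = b
  | e :: l, a, b => src e = a ∧ IsWalk src tgt l (tgt e) b

/-- `IsPath l a b`: the list of edges `l` forms a directed path from `a` to `b`:
all visited vertices are distinct (except that the final vertex is allowed to
coincide with the starting vertex). -/
def IsPath (src tgt : E → V) (l : List E) (a b : V) : Prop :=
  IsWalk src tgt l a b ∧ (l.map tgt).Nodup ∧ a ∉ (l.map tgt).dropLast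

/-- `T` is an arborescence rooted at `s`: for every vertex `v` there is a unique
directed path from `s` to `v` using only edges of `T`. -/
def IsArborescence (src tgt : E → V) (s : V) (T : Finset E) : Prop :=
  ∀ v : V, ∃! l : List E, (∀ e ∈ l, e ∈ T) ∧ IsPath src tgt l s v

/-- The edge `e ∉ T` is externally active for the arborescence `T` (w.r.t. the linear
order on `E`): where `P₁`, `P₂` are the two edge-disjoint directed paths in `T ∪ {e}`
sharing their starting vertex and ending at `tgt e`, with `e ∈ P₁`, the smallest edge
on `P₁ ++ P₂` lies on `P₁`. -/
def ExtActive [LinearOrder E] (src tgt : E → V) (T : Finset E) (e : E) : Prop :=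
  e ∉ T ∧ ∃ (u : V) (p₁ p₂ : List E),
    (∀ f ∈ p₁, f ∈ T ∨ f = e) ∧ (∀ f ∈ p₂, f ∈ T ∨ f = e) ∧
    IsPath src tgt p₁ u (tgt e) ∧ IsPath src tgt p₂ u (tgt e) ∧
    e ∈ p₁ ∧ (∀ f ∈ p₁, f ∉ p₂) ∧
    ∃ fmin ∈ p₁, ∀ f ∈ p₁ ++ p₂, fmin ≤ f

/-- The external activity `e(T)` of an arborescence `T`. -/
noncomputable def extActivity [LinearOrder E] (src tgt : E → V) (T : Finset E) : ℕ :=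
  Nat.card {e : E // ExtActive src tgt T e}

/-- The greedoid Tutte polynomial `T(G,s;y) = Σ_{T ∈ A(G,s)} y^{e(T)}`. -/
noncomputable def greedoidTutte [LinearOrder E] (src tgt : E → V) (s : V) : Polynomial ℤ :=
  ∑ᶠ T : {T : Finset E // IsArborescence src tgt s T}, X ^ extActivity src tgt T.1

/-- `f` is a `G^r`-parking function rooted at `s`. -/
def IsParking (src tgt : E → V) (s : V) (f : {v : V // v ≠ s} → ℕ) : Prop :=
  ∀ A : Finset {v : V // v ≠ s}, A.Nonempty →
    ∃ v ∈ A, f v < Nat.card {e : E // (∀ w ∈ A, src e ≠ w.1) ∧ tgt e = v.1}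

/-- The d-level of a `G^r`-parking function: `|E| − |V| + 1 − Σ_{v≠s} f(v)`. -/
noncomputable def parkDlvl (src : E → V) (s : V) (f : {v : V // v ≠ s} → ℕ) : ℕ :=
  ((Fintype.card E : ℤ) - Fintype.card V + 1 - ∑ v : {v : V // v ≠ s}, (f v : ℤ)).toNat

/-- `σ` is an s-decreasing traversal: a sequence in which every vertex and edge of `G`
appears exactly once, satisfying (R1) every vertex other than `s` is immediately
preceded by an edge targeting it, and (R2) every edge is the `<ₑ`-maximum edge not yet
seen whose source has been seen. -/
def IsTraversal [LinearOrder E] (src tgt : E → V) (s : V) (σ : List (V ⊕ E)) : Prop :=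
  σ.Nodup ∧ (∀ x : V ⊕ E, x ∈ σ) ∧
  (∀ (i : ℕ) (hi : i < σ.length) (v : V),
      σ.get ⟨i, hi⟩ = Sum.inl v → v ≠ s →
      0 < i ∧ ∃ e : E, tgt e = v ∧ σ.get ⟨i - 1, by omega⟩ = Sum.inr e) ∧
  (∀ (i : ℕ) (hi : i < σ.length) (e : E),
      σ.get ⟨i, hi⟩ = Sum.inr e →
      Sum.inl (src e) ∈ σ.take i ∧
      ∀ f : E, Sum.inr f ∉ σ.take i → Sum.inl (src f) ∈ σ.take i → f ≤ e)

open scoped Classical in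
/-- `Υ(σ)`: the set of edges immediately preceding a non-sink vertex in `σ`. -/
noncomputable def Upsilon (src tgt : E → V) (s : V) (σ : List (V ⊕ E)) : Finset E :=
  Finset.univ.filter fun e =>
    ∃ (i : ℕ) (hi : i < σ.length) (v : V), v ≠ s ∧ σ.get ⟨i, hi⟩ = Sum.inl v ∧
      0 < i ∧ ∃ hj : i - 1 < σ.length, σ.get ⟨i - 1, hj⟩ = Sum.inr e

/-- The strength of `σ`: the number of strong edges, i.e. edges whose target appears
before them in `σ`. -/
noncomputable def strength (tgt : E → V) (σ : List (V ⊕ E)) : ℕ :=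
  Nat.card {e : E // ∃ (i : ℕ) (hi : i < σ.length),
    σ.get ⟨i, hi⟩ = Sum.inr e ∧ Sum.inl (tgt e) ∈ σ.take i}

/-- `Ψ(σ)(v)`: one less than the number of edges targeting `v` that appear before the
vertex `v` in `σ`. -/
def Psi (tgt : E → V) (s : V) (σ : List (V ⊕ E)) : {v : V // v ≠ s} → ℕ :=
  fun v =>
    (((σ.takeWhile fun x => x ≠ Sum.inl v.1).filterMap Sum.getRight?).filter
      fun e => tgt e = v.1).length - 1

/-!
Firing is abelian, so a firing vertex occurring in a legal sequence can be moved to its front. In a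
nonempty closed legal sequence the set of fired vertices is closed under out-neighbours, since a
vertex that is not fired but receives chips would gain chips for good. On a strongly connected
digraph every vertex is therefore fired, and a configuration lying on such a cycle can be recovered
after any legal move: it is recurrent.

In the sinkless game chips are conserved, so a cycle of the `s`-game would lift to a cycle in which
`s` is never fired. There is thus none, and every `s`-configuration stabilizes. Given an
`s`-recurrent `ĉ`, add chips at `s` to reach the total `T = dlvl [ĉ]`. Firing `s` and stabilizing
elsewhere runs through the class of `ĉ`, and the choice of `T` keeps at least `deg⁺ s` chips on `s`
each time, until `ĉ` comes back: the configuration lies on a cycle, so `slvl ĉ ≤ T`. Conversely a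
recurrent configuration is unstable, which for a stable `ĉ` requires `deg⁺ s` chips on `s`, so
`dlvl ĉ ≤ slvl ĉ`.
-/

section Development

omit [Fintype V] [DecidableEq E]

variable {src tgt : E → V} {s : V}

/-! ### The sinkless game -/

theorem fire_add_ite {c : V → ℕ} {v : V} (hv : outdeg src v ≤ c v) (w : V) :
    fire src tgt c v w + (if w = v then outdeg src v else 0) = c w + numEdges src tgt v w := by
  by_cases h : w = v
  · subst h
    simp only [fire, if_true]
    omega
  · simp [fire, h]

theorem fire_apply_of_ne (c : V → ℕ) {v w : V} (h : w ≠ v) :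
    fire src tgt c v w = c w + numEdges src tgt v w := by
  simp [fire, h]

theorem le_fire_apply_of_ne (c : V → ℕ) {v w : V} (h : w ≠ v) : c w ≤ fire src tgt c v w := by
  simp [fire_apply_of_ne c h]

theorem fire_comm {c : V → ℕ} {u v : V} (huv : u ≠ v) (hu : outdeg src u ≤ c u)
    (hv : outdeg src v ≤ c v) :
    fire src tgt (fire src tgt c u) v = fire src tgt (fire src tgt c v) u := by
  have hv' : outdeg src v ≤ fire src tgt c u v := hv.trans (le_fire_apply_of_ne c huv.symm)
  have hu' : outdeg src u ≤ fire src tgt c v u := hu.trans (le_fire_apply_of_ne c huv)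
  funext w
  have hcu := fire_add_ite (tgt := tgt) hu w
  have hcv := fire_add_ite (tgt := tgt) hv w
  have hcuv := fire_add_ite (tgt := tgt) hv' w
  have hcvu := fire_add_ite (tgt := tgt) hu' w
  omega

theorem numEdges_pos (src tgt : E → V) (e : E) : 0 < numEdges src tgt (src e) (tgt e) :=
  card_pos.2 ⟨e, by simp⟩

theorem sum_numEdges [Fintype V] (src tgt : E → V) (v : V) :
    ∑ w, numEdges src tgt v w = outdeg src v := by
  simp only [numEdges, outdeg, ← filter_filter]
  exact (card_eq_sum_card_fiberwise fun _ _ ↦ mem_coe.2 (mem_univ _)).symm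

theorem sum_outdeg [Fintype V] (src : E → V) : ∑ v, outdeg src v = Fintype.card E :=
  (card_eq_sum_card_fiberwise fun _ _ ↦ mem_coe.2 (mem_univ _)).symm

theorem lvl_fire [Fintype V] {c : V → ℕ} {v : V} (hv : outdeg src v ≤ c v) :
    lvl (fire src tgt c v) = lvl c := by
  have hsum := sum_congr rfl fun w (_ : w ∈ univ) ↦ fire_add_ite (tgt := tgt) hv w
  simpa [lvl, sum_add_distrib, sum_numEdges] using hsum

theorem Reach.lvl_eq [Fintype V] {c d : V → ℕ} (h : Reach src tgt c d) : lvl d = lvl c := by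
  induction h with
  | refl => rfl
  | tail _ hstep ih =>
    obtain ⟨v, hv, rfl⟩ := hstep
    rw [lvl_fire hv, ih]

theorem reach_iff_exists_legalSeq {c d : V → ℕ} :
    Reach src tgt c d ↔ ∃ l, LegalSeq src tgt l c d := by
  constructor
  · intro h
    induction h using Relation.ReflTransGen.head_induction_on with
    | refl => exact ⟨[], rfl⟩
    | head hstep _ ih =>
      obtain ⟨v, hv, rfl⟩ := hstep
      obtain ⟨l, hl⟩ := ih
      exact ⟨v :: l, hv, hl⟩
  · rintro ⟨l, hl⟩
    induction l generalizing c with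
    | nil => exact hl ▸ .refl
    | cons v l ih => exact .head ⟨v, hl.1, rfl⟩ (ih hl.2)

theorem LegalSeq.erase {l : List V} {c d : V → ℕ} {v : V} (h : LegalSeq src tgt l c d)
    (hl : v ∈ l) (hv : outdeg src v ≤ c v) :
    LegalSeq src tgt (l.erase v) (fire src tgt c v) d := by
  induction l generalizing c with
  | nil => simp at hl
  | cons u l ih =>
    by_cases huv : u = v
    · subst huv
      simpa using h.2
    · rw [List.erase_cons_tail (by simpa using huv)]
      refine ⟨h.1.trans (le_fire_apply_of_ne c huv), ?_⟩
      rw [← fire_comm huv h.1 hv]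
      exact ih h.2 (List.mem_of_ne_of_mem (Ne.symm huv) hl)
        (hv.trans (le_fire_apply_of_ne c (Ne.symm huv)))

theorem LegalSeq.apply_of_notMem {l : List V} {c d : V → ℕ} {w : V} (h : LegalSeq src tgt l c d)
    (hw : w ∉ l) : d w = c w + (l.map fun v ↦ numEdges src tgt v w).sum := by
  induction l generalizing c with
  | nil => simp [show d = c from h]
  | cons v l ih =>
    obtain ⟨hwv, hwl⟩ := List.ne_and_not_mem_of_not_mem_cons hw
    rw [ih h.2 hwl, fire_apply_of_ne c hwv, List.map_cons, List.sum_cons, add_assoc]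

theorem LegalSeq.mem_of_reflTransGen {l : List V} {c : V → ℕ} {u w : V}
    (h : LegalSeq src tgt l c c) (hu : u ∈ l)
    (huw : Relation.ReflTransGen (fun a b ↦ ∃ e, src e = a ∧ tgt e = b) u w) : w ∈ l := by
  induction huw with
  | refl => exact hu
  | tail _ hedge ih =>
    obtain ⟨e, rfl, rfl⟩ := hedge
    by_contra hw
    have hle : numEdges src tgt (src e) (tgt e) ≤
        (l.map fun v ↦ numEdges src tgt v (tgt e)).sum :=
      List.le_sum_of_mem (List.mem_map_of_mem ih)
    have hgain := h.apply_of_notMem hw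
    have hpos := numEdges_pos src tgt e
    omega

theorem reach_of_fireStep_of_transGen_self (hG : StronglyConnected src tgt) {c d : V → ℕ}
    (hc : Relation.TransGen (FireStep src tgt) c c) (hcd : FireStep src tgt c d) :
    Reach src tgt d c := by
  obtain ⟨_, ⟨u, hu, rfl⟩, hback⟩ := Relation.TransGen.head'_iff.1 hc
  obtain ⟨l, hl⟩ := reach_iff_exists_legalSeq.1 hback
  have hcycle : LegalSeq src tgt (u :: l) c c := ⟨hu, hl⟩
  obtain ⟨v, hv, rfl⟩ := hcd
  have hmem : v ∈ u :: l := hcycle.mem_of_reflTransGen List.mem_cons_self (hG u v)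
  exact reach_iff_exists_legalSeq.2 ⟨_, hcycle.erase hmem hv⟩

theorem recurrent_of_transGen_self (hG : StronglyConnected src tgt) {c : V → ℕ}
    (hc : Relation.TransGen (FireStep src tgt) c c) : Recurrent src tgt c := by
  constructor
  · obtain ⟨_, ⟨v, hv, -⟩, -⟩ := Relation.TransGen.head'_iff.1 hc
    exact fun hstable ↦ (hstable v).not_ge hv
  · intro d hcd
    suffices Reach src tgt d c ∧ Relation.TransGen (FireStep src tgt) d d from this.1
    induction hcd with
    | refl => exact ⟨.refl, hc⟩
    | tail _ hstep ih =>
      have hback := reach_of_fireStep_of_transGen_self hG ih.2 hstep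
      exact ⟨hback.trans ih.1, .tail' hback hstep⟩

/-! ### Restriction to `V ∖ {s}` -/

theorem lvl_eq_add_sum_restrictS [Fintype V] (s : V) (c : V → ℕ) :
    lvl c = c s + ∑ v, restrictS s c v :=
  Fintype.sum_eq_add_sum_subtype_ne c s

omit [DecidableEq V] in
theorem eq_of_restrictS_eq_of_lvl_eq [Fintype V] {c d : V → ℕ}
    (hres : restrictS s c = restrictS s d) (hlvl : lvl c = lvl d) : c = d := by
  classical
  funext v
  by_cases hv : v = s
  · subst hv
    rw [lvl_eq_add_sum_restrictS v c, lvl_eq_add_sum_restrictS v d, hres] at hlvl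
    exact Nat.add_right_cancel hlvl
  · exact congrFun hres ⟨v, hv⟩

theorem dlvl_restrictS_le_lvl_iff [Fintype V] {c : V → ℕ} :
    dlvl src s (restrictS s c) ≤ lvl c ↔ outdeg src s ≤ c s := by
  rw [dlvl, lvl_eq_add_sum_restrictS s, add_le_add_iff_right]

theorem extendS_add_smul_deltaS_self (s : V) (c : {v : V // v ≠ s} → ℕ) (k : ℕ) :
    (extendS s c + k • deltaS s) s = k := by
  simp [extendS, deltaS]

theorem restrictS_extendS_add_smul_deltaS (s : V) (c : {v : V // v ≠ s} → ℕ) (k : ℕ) :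
    restrictS s (extendS s c + k • deltaS s) = c := by
  funext v
  simp [restrictS, extendS, deltaS, v.2]

theorem restrictS_extendS (s : V) (c : {v : V // v ≠ s} → ℕ) : restrictS s (extendS s c) = c := by
  simpa using restrictS_extendS_add_smul_deltaS s c 0

theorem lvl_extendS_add_smul_deltaS [Fintype V] (s : V) (c : {v : V // v ≠ s} → ℕ) (k : ℕ) :
    lvl (extendS s c + k • deltaS s) = k + ∑ v, c v := by
  rw [lvl_eq_add_sum_restrictS s, extendS_add_smul_deltaS_self, restrictS_extendS_add_smul_deltaS]

theorem restrictS_fire (c : V → ℕ) (v : {v : V // v ≠ s}) :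
    restrictS s (fire src tgt c v) = sfire src tgt s (restrictS s c) v := by
  funext w
  simp [restrictS, fire, sfire, Subtype.ext_iff]

theorem restrictS_fire_self (c : V → ℕ) :
    restrictS s (fire src tgt c s) = restrictS s c + betaS src tgt s :=
  funext fun v ↦ fire_apply_of_ne c v.2

theorem SReach.exists_legalSeq {a b : {v : V // v ≠ s} → ℕ} (h : SReach src tgt s a b) {c : V → ℕ}
    (hc : restrictS s c = a) :
    ∃ l d, LegalSeq src tgt l c d ∧ s ∉ l ∧ restrictS s d = b := by
  induction h using Relation.ReflTransGen.head_induction_on generalizing c with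
  | refl => exact ⟨[], c, rfl, List.not_mem_nil, hc⟩
  | head hstep _ ih =>
    obtain ⟨v, hv, rfl⟩ := hstep
    subst hc
    obtain ⟨l, d, hl, hsl, hd⟩ := ih (restrictS_fire c v)
    exact ⟨v :: l, d, ⟨hv, hl⟩, List.not_mem_cons_of_ne_of_not_mem v.2.symm hsl, hd⟩

theorem SReach.exists_reach {a b : {v : V // v ≠ s} → ℕ} (h : SReach src tgt s a b) {c : V → ℕ}
    (hc : restrictS s c = a) : ∃ d, Reach src tgt c d ∧ restrictS s d = b := by
  obtain ⟨l, d, hl, -, hd⟩ := h.exists_legalSeq hc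
  exact ⟨d, reach_iff_exists_legalSeq.2 ⟨l, hl⟩, hd⟩

/-! ### Stabilization -/

theorem le_sfire_apply_of_ne (c : {v : V // v ≠ s} → ℕ) {v w : {v : V // v ≠ s}} (h : w ≠ v) :
    c w ≤ sfire src tgt s c v w := by
  simp [sfire, h]

theorem sfire_comm {c : {v : V // v ≠ s} → ℕ} {u v : {v : V // v ≠ s}} (huv : u ≠ v)
    (hu : outdeg src u.1 ≤ c u) (hv : outdeg src v.1 ≤ c v) :
    sfire src tgt s (sfire src tgt s c u) v = sfire src tgt s (sfire src tgt s c v) u := by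
  obtain ⟨c, rfl⟩ : ∃ c', restrictS s c' = c := ⟨_, restrictS_extendS s c⟩
  simp only [← restrictS_fire]
  exact congrArg (restrictS s) (fire_comm (Subtype.coe_ne_coe.2 huv) hu hv)

theorem sFireStep_diamond {c d e : {v : V // v ≠ s} → ℕ} (hd : SFireStep src tgt s c d)
    (he : SFireStep src tgt s c e) :
    ∃ f, Relation.ReflGen (SFireStep src tgt s) d f ∧ SReach src tgt s e f := by
  obtain ⟨u, hu, rfl⟩ := hd
  obtain ⟨v, hv, rfl⟩ := he
  by_cases huv : u = v
  · subst huv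
    exact ⟨_, .refl, .refl⟩
  · exact ⟨_, .single ⟨v, hv.trans (le_sfire_apply_of_ne c (Ne.symm huv)), rfl⟩,
      .single ⟨u, hu.trans (le_sfire_apply_of_ne c huv), sfire_comm huv hu hv⟩⟩

theorem SStable.eq_of_sReach {c d : {v : V // v ≠ s} → ℕ} (hc : SStable src s c)
    (h : SReach src tgt s c d) : c = d := by
  obtain rfl | ⟨_, ⟨v, hv, -⟩, -⟩ := h.cases_head
  · rfl
  · exact absurd hv (hc v).not_ge

theorem SReach.eq_of_sStable {c d e : {v : V // v ≠ s} → ℕ} (hd : SReach src tgt s c d)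
    (hds : SStable src s d) (he : SReach src tgt s c e) (hes : SStable src s e) : d = e := by
  obtain ⟨f, hdf, hef⟩ := Relation.church_rosser (fun _ _ _ ↦ sFireStep_diamond) hd he
  rw [hds.eq_of_sReach hdf, hes.eq_of_sReach hef]

/-- `s` is a global sink: every vertex has a directed path to `s`. Edges leaving `s` are allowed,
as the `s`-game never uses them. This is what makes every `s`-configuration stabilize. -/
def IsGlobalSink (src tgt : E → V) (s : V) : Prop :=
  ∀ v, Relation.ReflTransGen (fun a b ↦ ∃ e, src e = a ∧ tgt e = b) v s

omit [DecidableEq V] [Fintype E] in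
theorem StronglyConnected.isGlobalSink (hG : StronglyConnected src tgt) (s : V) :
    IsGlobalSink src tgt s :=
  fun v ↦ hG v s

theorem not_transGen_sFireStep_self [Finite V] (hs : IsGlobalSink src tgt s)
    (a : {v : V // v ≠ s} → ℕ) : ¬ Relation.TransGen (SFireStep src tgt s) a a := by
  have := Fintype.ofFinite V
  intro h
  obtain ⟨_, ⟨v, hv, rfl⟩, hback⟩ := Relation.TransGen.head'_iff.1 h
  obtain ⟨c, rfl⟩ : ∃ c, restrictS s c = a := ⟨_, restrictS_extendS s a⟩
  obtain ⟨l, d, hl, hsl, hd⟩ := SReach.exists_legalSeq hback (restrictS_fire c v)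
  have hcd : LegalSeq src tgt (v :: l) c d := ⟨hv, hl⟩
  obtain rfl : d = c :=
    eq_of_restrictS_eq_of_lvl_eq hd (reach_iff_exists_legalSeq.2 ⟨_, hcd⟩).lvl_eq
  exact List.not_mem_cons_of_ne_of_not_mem v.2.symm hsl
    (hcd.mem_of_reflTransGen List.mem_cons_self (hs v))

theorem finite_setOf_sReach [Finite V] (c : {v : V // v ≠ s} → ℕ) :
    {d | SReach src tgt s c d}.Finite := by
  have := Fintype.ofFinite V
  refine (Set.finite_Iic fun _ ↦ lvl (extendS s c)).subset fun d hd v ↦ ?_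
  obtain ⟨d, hreach, rfl⟩ := SReach.exists_reach hd (restrictS_extendS s c)
  rw [← hreach.lvl_eq]
  exact single_le_sum (fun _ _ ↦ Nat.zero_le _) (mem_univ v.1)

theorem exists_sReach_sStable [Finite V] (hs : IsGlobalSink src tgt s)
    (c : {v : V // v ≠ s} → ℕ) : ∃ d, SReach src tgt s c d ∧ SStable src s d := by
  let After (a b : {v : V // v ≠ s} → ℕ) : Prop := Relation.TransGen (SFireStep src tgt s) b a
  have : IsStrictOrder _ After :=
    { irrefl := not_transGen_sFireStep_self hs
      trans := fun _ _ _ hab hbc ↦ hbc.trans hab }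
  have hwf : {d | SReach src tgt s c d}.WellFoundedOn After :=
    (finite_setOf_sReach c).wellFoundedOn
  obtain ⟨⟨d, hcd⟩, -, hlast⟩ := hwf.has_min Set.univ ⟨⟨c, .refl⟩, trivial⟩
  refine ⟨d, hcd, fun v ↦ ?_⟩
  by_contra! hv
  have hstep : SFireStep src tgt s d (sfire src tgt s d v) := ⟨v, hv, rfl⟩
  exact hlast ⟨_, hcd.tail hstep⟩ trivial (.single hstep)

theorem sReach_stab [Finite V] (hs : IsGlobalSink src tgt s) (c : {v : V // v ≠ s} → ℕ) :
    SReach src tgt s c (stab src tgt s c) :=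
  (Classical.epsilon_spec (exists_sReach_sStable hs c)).1

theorem sStable_stab [Finite V] (hs : IsGlobalSink src tgt s) (c : {v : V // v ≠ s} → ℕ) :
    SStable src s (stab src tgt s c) :=
  (Classical.epsilon_spec (exists_sReach_sStable hs c)).2

theorem SReach.stab_eq [Finite V] (hs : IsGlobalSink src tgt s) {c d : {v : V // v ≠ s} → ℕ}
    (h : SReach src tgt s c d) (hd : SStable src s d) : stab src tgt s c = d :=
  (sReach_stab hs c).eq_of_sStable (sStable_stab hs c) h hd

theorem SStable.stab_eq [Finite V] (hs : IsGlobalSink src tgt s) {c : {v : V // v ≠ s} → ℕ}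
    (hc : SStable src s c) : stab src tgt s c = c :=
  SReach.stab_eq hs .refl hc

theorem sfire_add {c : {v : V // v ≠ s} → ℕ} {v : {v : V // v ≠ s}} (hv : outdeg src v.1 ≤ c v)
    (b : {v : V // v ≠ s} → ℕ) : sfire src tgt s (c + b) v = sfire src tgt s c v + b := by
  funext w
  simp only [sfire, Pi.add_apply]
  split_ifs with hw
  · subst hw
    omega
  · omega

theorem SReach.add_right {c d : {v : V // v ≠ s} → ℕ} (h : SReach src tgt s c d)
    (b : {v : V // v ≠ s} → ℕ) : SReach src tgt s (c + b) (d + b) := by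
  refine Relation.ReflTransGen.lift (p := SFireStep src tgt s) (· + b) ?_ _ _ h
  rintro c _ ⟨v, hv, rfl⟩
  exact ⟨v, hv.trans (Nat.le_add_right _ _), (sfire_add hv b).symm⟩

theorem stab_stab_add [Finite V] (hs : IsGlobalSink src tgt s) (a b : {v : V // v ≠ s} → ℕ) :
    stab src tgt s (stab src tgt s a + b) = stab src tgt s (a + b) :=
  (SReach.stab_eq hs (((sReach_stab hs a).add_right b).trans (sReach_stab hs _))
    (sStable_stab hs _)).symm

/-! ### `s`-recurrent configurations -/

theorem SRecurrent.sStable [Finite V] (hs : IsGlobalSink src tgt s) {c : {v : V // v ≠ s} → ℕ}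
    (hc : SRecurrent src tgt s c) : SStable src s c := by
  obtain ⟨c', rfl⟩ := hc 0
  exact sStable_stab hs _

theorem SRecurrent.stab_add [Finite V] (hs : IsGlobalSink src tgt s) {c : {v : V // v ≠ s} → ℕ}
    (hc : SRecurrent src tgt s c) (b : {v : V // v ≠ s} → ℕ) :
    SRecurrent src tgt s (stab src tgt s (c + b)) := by
  intro a
  obtain ⟨a', rfl⟩ := hc a
  exact ⟨a' + b, by rw [stab_stab_add hs, add_assoc]⟩

theorem finite_setOf_sStable [Finite V] (src : E → V) (s : V) : {c | SStable src s c}.Finite :=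
  by
  have := Fintype.ofFinite V
  exact (Set.finite_Iic fun v : {v : V // v ≠ s} ↦ outdeg src v.1).subset fun _ hc v ↦ (hc v).le

theorem SRecurrent.exists_stab_add_nsmul_eq [Finite V] (hs : IsGlobalSink src tgt s)
    {c : {v : V // v ≠ s} → ℕ} (hc : SRecurrent src tgt s c) (b : {v : V // v ≠ s} → ℕ) :
    ∃ n : ℕ, stab src tgt s (c + (n + 1) • b) = c := by
  obtain ⟨i, -, j, -, hij, heq⟩ := Set.infinite_univ.exists_lt_map_eq_of_mapsTo
    (f := fun m : ℕ ↦ stab src tgt s (m • b)) (t := {c | SStable src s c})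
    (fun _ _ ↦ sStable_stab hs _) (finite_setOf_sStable src s)
  obtain ⟨n, rfl⟩ := Nat.exists_eq_add_of_lt hij
  obtain ⟨a, hac⟩ := hc (i • b)
  refine ⟨n, ?_⟩
  calc stab src tgt s (c + (n + 1) • b)
      = stab src tgt s (i • b + a + (n + 1) • b) := by rw [← hac, stab_stab_add hs]
    _ = stab src tgt s ((i + n + 1) • b + a) := by rw [add_right_comm, ← add_nsmul, add_assoc i]
    _ = stab src tgt s (i • b + a) := by rw [← stab_stab_add hs, ← heq, stab_stab_add hs]
    _ = c := hac

theorem dlvl_le_card_of_sStable [Fintype V] {c : {v : V // v ≠ s} → ℕ} (hc : SStable src s c) :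
    dlvl src s c ≤ Fintype.card E := by
  rw [← sum_outdeg src, Fintype.sum_eq_add_sum_subtype_ne _ s]
  exact Nat.add_le_add_left (sum_le_sum fun v _ ↦ (hc v).le) _

/-! ### Levels -/

theorem exists_transGen_restrictS_eq_stab [Finite V] (hs : IsGlobalSink src tgt s) {x : V → ℕ}
    (hx : outdeg src s ≤ x s) :
    ∃ y, Relation.TransGen (FireStep src tgt) x y ∧
      restrictS s y = stab src tgt s (restrictS s x + betaS src tgt s) := by
  obtain ⟨y, hreach, hy⟩ := (sReach_stab hs _).exists_reach (restrictS_fire_self (src := src) x)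
  exact ⟨y, .head' ⟨s, hx, rfl⟩ hreach, hy⟩

theorem exists_reach_restrictS_eq_stab_add_nsmul [Fintype V] (hs : IsGlobalSink src tgt s)
    {x : V → ℕ} (hx : SStable src s (restrictS s x))
    (hlvl : ∀ i : ℕ, dlvl src s (stab src tgt s (restrictS s x + i • betaS src tgt s)) ≤ lvl x)
    (n : ℕ) :
    ∃ y, Reach src tgt x y ∧
      restrictS s y = stab src tgt s (restrictS s x + n • betaS src tgt s) := by
  induction n with
  | zero => exact ⟨x, .refl, by rw [zero_nsmul, add_zero, hx.stab_eq hs]⟩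
  | succ n ih =>
    obtain ⟨y, hxy, hy⟩ := ih
    have hys : outdeg src s ≤ y s := dlvl_restrictS_le_lvl_iff.1 (by
      rw [hy, hxy.lvl_eq]
      exact hlvl n)
    obtain ⟨z, hyz, hz⟩ := exists_transGen_restrictS_eq_stab hs hys
    exact ⟨z, hxy.trans hyz.to_reflTransGen, by
      rw [hz, hy, stab_stab_add hs, add_assoc, ← succ_nsmul]⟩

theorem recurrent_of_forall_dlvl_le [Fintype V] (hG : StronglyConnected src tgt) {x : V → ℕ}
    (hx : SRecurrent src tgt s (restrictS s x))
    (hlvl : ∀ i : ℕ, dlvl src s (stab src tgt s (restrictS s x + i • betaS src tgt s)) ≤ lvl x) :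
    Recurrent src tgt x := by
  have hs := hG.isGlobalSink s
  obtain ⟨n, hn⟩ := hx.exists_stab_add_nsmul_eq hs (betaS src tgt s)
  obtain ⟨y, hxy, hy⟩ :=
    exists_reach_restrictS_eq_stab_add_nsmul hs (hx.sStable hs) hlvl n
  have hys : outdeg src s ≤ y s := dlvl_restrictS_le_lvl_iff.1 (by
    rw [hy, hxy.lvl_eq]
    exact hlvl n)
  obtain ⟨z, hyz, hz⟩ := exists_transGen_restrictS_eq_stab hs hys
  have hxz : Relation.TransGen (FireStep src tgt) x z := .trans_right hxy hyz
  have hzx : z = x := by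
    refine eq_of_restrictS_eq_of_lvl_eq (s := s) ?_ (Reach.lvl_eq hxz.to_reflTransGen)
    rw [hz, hy, stab_stab_add hs, add_assoc, ← succ_nsmul, hn]
  exact recurrent_of_transGen_self hG (hzx ▸ hxz)

theorem recurrent_phi [Finite V] (hG : StronglyConnected src tgt) {c : {v : V // v ≠ s} → ℕ}
    (hc : SRecurrent src tgt s c) : Recurrent src tgt (phi src tgt s c) := by
  have := Fintype.ofFinite V
  have hs := hG.isGlobalSink s
  refine Nat.sInf_mem (s := {k | Recurrent src tgt (extendS s c + k • deltaS s)})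
    ⟨Fintype.card E, recurrent_of_forall_dlvl_le (s := s) hG ?_ fun i ↦ ?_⟩
  · rwa [restrictS_extendS_add_smul_deltaS]
  · rw [lvl_extendS_add_smul_deltaS]
    exact (dlvl_le_card_of_sStable (sStable_stab hs _)).trans (Nat.le_add_right _ _)

theorem lvl_phi [Fintype V] (c : {v : V // v ≠ s} → ℕ) :
    lvl (phi src tgt s c) = slvl src tgt s c :=
  lvl_extendS_add_smul_deltaS s c _

theorem dlvl_le_slvl [Fintype V] (hG : StronglyConnected src tgt) {c : {v : V // v ≠ s} → ℕ}
    (hc : SRecurrent src tgt s c) : dlvl src s c ≤ slvl src tgt s c := by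
  have hres : restrictS s (phi src tgt s c) = c := restrictS_extendS_add_smul_deltaS s c _
  obtain ⟨v, hv⟩ := not_forall.1 (recurrent_phi hG hc).1
  have hvs : v = s := by
    by_contra hvs
    have hcv := hc.sStable (hG.isGlobalSink s) ⟨v, hvs⟩
    rw [← hres] at hcv
    exact hv hcv
  subst hvs
  rw [← lvl_phi]
  nth_rw 1 [← hres]
  exact dlvl_restrictS_le_lvl_iff.2 (not_lt.1 hv)

theorem slvl_le_of_forall_dlvl_le [Fintype V] (hG : StronglyConnected src tgt)
    {c : {v : V // v ≠ s} → ℕ} (hc : SRecurrent src tgt s c) {T : ℕ}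
    (hT : ∀ i : ℕ, dlvl src s (stab src tgt s (c + i • betaS src tgt s)) ≤ T) :
    slvl src tgt s c ≤ T := by
  have hs := hG.isGlobalSink s
  have hsum : ∑ v, c v ≤ T := by
    have hdlvl := hT 0
    rw [zero_nsmul, add_zero, (hc.sStable hs).stab_eq hs] at hdlvl
    exact (Nat.le_add_left _ _).trans hdlvl
  obtain ⟨k, rfl⟩ := Nat.exists_eq_add_of_le' hsum
  refine Nat.add_le_add_right (Nat.sInf_le (recurrent_of_forall_dlvl_le (s := s) hG ?_ ?_)) _
  · rwa [restrictS_extendS_add_smul_deltaS]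
  · rwa [restrictS_extendS_add_smul_deltaS, lvl_extendS_add_smul_deltaS]

theorem dlvl_le_dlvlClass [Fintype V] (hs : IsGlobalSink src tgt s) (c : RecS src tgt s) :
    dlvl src s c.1 ≤ dlvlClass src tgt s (Quotient.mk (recSSetoid src tgt s) c) := by
  refine le_csSup ⟨Fintype.card E, ?_⟩ ⟨c, rfl, rfl⟩
  rintro _ ⟨d, -, rfl⟩
  exact dlvl_le_card_of_sStable (d.2.sStable hs)

theorem slvl_le_dlvlClass [Fintype V] (hG : StronglyConnected src tgt) (c : RecS src tgt s) :
    slvl src tgt s c.1 ≤ dlvlClass src tgt s (Quotient.mk (recSSetoid src tgt s) c) := by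
  have hs := hG.isGlobalSink s
  refine slvl_le_of_forall_dlvl_le hG c.2 fun i ↦ ?_
  let d : RecS src tgt s := ⟨_, c.2.stab_add hs (i • betaS src tgt s)⟩
  have hcd : Quotient.mk (recSSetoid src tgt s) c = Quotient.mk (recSSetoid src tgt s) d :=
    Quotient.sound (.rel _ _ ⟨i, rfl⟩)
  rw [hcd]
  exact dlvl_le_dlvlClass hs d

end Development

/-- For every `~_s`-class of s-recurrent configurations the s-level and
the d-level coincide. -/
theorem slvlClass_eq_dlvlClass [Nonempty V] (src tgt : E → V)
    (hG : StronglyConnected src tgt) (s : V) (q : RecSQuot src tgt s) :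
    slvlClass src tgt s q = dlvlClass src tgt s q := by
  have hle : ∀ n ∈ (fun c : RecS src tgt s ↦ slvl src tgt s c.1) ''
      {c | Quotient.mk (recSSetoid src tgt s) c = q}, n ≤ dlvlClass src tgt s q := by
    rintro _ ⟨c, rfl, rfl⟩
    exact slvl_le_dlvlClass hG c
  obtain ⟨c₀, hc₀⟩ := Quotient.exists_rep q
  refine le_antisymm (csSup_le ⟨_, c₀, hc₀, rfl⟩ hle) (csSup_le ⟨_, c₀, hc₀, rfl⟩ ?_)
  rintro _ ⟨c, hc, rfl⟩
  exact (dlvl_le_slvl hG c.2).trans (le_csSup ⟨_, hle⟩ ⟨c, hc, rfl⟩)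

end SandpileBM
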